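/- arXiv:2511.14985 — 3 statements merged into one kernel-verified Lean document; each statement's English description precedes it below -/
import Mathlib

section
/- Let M be a closed connected topological 3-manifold (a compact, connected, Hausdorff, second-countable space locally homeomorphic to ℝ³), let L ⊆ M be a link (the image of a topological embedding of a nonempty finite disjoint union of circles into M), and let f : S³ → M be a branched covering with branching set L, where S³ is the unit sphere in euclidean ℝ⁴. Then the fundamental group of M is finite. -/
/-!
The conceptual argument: let `N → M` be the universal covering. Since `S³` is simply connected,
`f` lifts to a map `S³ → N`, which is open because `f` is. Its image is then both open and compact,
hence all of `N`; so `N` is compact and its fibers, which are in bijection with `π₁(M)`, are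
finite.

The proof below unwinds this without constructing `N`. Fix `s₀ : S³`, and send a point `s` of the
fiber over `f s₀` to the class of the loop `f ∘ p`, where `p` is any path from `s₀` to `s`; this
does not depend on `p`. The resulting map from the fiber to `π₁(M, f s₀)` is

* locally constant: on a path component of `f ⁻¹' U`, with `U` simply connected, the loops differ
  by a loop inside `U`;
* surjective: over a connected open `U`, each path component of `f ⁻¹' U` maps onto `U`
  (`subset_image_pathComponentIn`), so that paths in `M` can be lifted up to homotopy.

As the fiber is compact, its image is finite (`finite_homotopicQuotient_of_isOpenMap`).

Simple connectivity of `S³` comes from the easy half of the Seifert-van Kampen theorem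
(`subsingleton_homotopic_of_cover`), applied to the complements of two points. Both this and the
surjectivity rest on the same propagation principle for path classes, `Path.track`.
-/

open Topology

noncomputable section

/-- A closed (compact, Hausdorff, second-countable) topological 3-manifold. -/
def IsClosedManifold3 (M : Type*) [TopologicalSpace M] : Prop :=
  CompactSpace M ∧ T2Space M ∧ SecondCountableTopology M ∧
    ∀ x : M, ∃ U : Set M, IsOpen U ∧ x ∈ U ∧ Nonempty (U ≃ₜ EuclideanSpace ℝ (Fin 3))

/-- A link: the image of a topological embedding of a nonempty finite disjoint
union of circles. -/
def IsLink {M : Type*} [TopologicalSpace M] (L : Set M) : Prop :=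
  ∃ n : ℕ, 0 < n ∧
    ∃ e : Fin n × Metric.sphere (0 : EuclideanSpace ℝ (Fin 2)) 1 → M,
      IsEmbedding e ∧ L = Set.range e

/-- A branched covering with branching set `L`: an open proper (continuous) map whose
restriction to the complement of `L` is a covering map with finite fibers. -/
def IsBranchedCovering {A B : Type*} [TopologicalSpace A] [TopologicalSpace B]
    (f : A → B) (L : Set B) : Prop :=
  IsClosed L ∧ IsOpenMap f ∧ IsProperMap f ∧
    IsCoveringMap (Lᶜ.restrictPreimage f) ∧
    ∀ y : ↥(Lᶜ), Set.Finite (Lᶜ.restrictPreimage f ⁻¹' {y})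

/-- The unit sphere in euclidean `ℝ⁴`. -/
abbrev S3 : Set (EuclideanSpace ℝ (Fin 4)) := Metric.sphere 0 1

/-! ### Path classes -/

/-- A property of path classes issuing from `x₀` that holds for the constant class, and that
persists under concatenation with any path lying in one member of a suitable open cover, holds for
all path classes: the times `t` at which `γ` restricted to `[0, t]` has the property form a clopen
subset of the unit interval. -/
theorem Path.track {X : Type*} [TopologicalSpace X] {x₀ : X}
    (P : ∀ y, Path.Homotopic.Quotient x₀ y → Prop)
    (h0 : P x₀ (.refl x₀))
    (hstep : ∀ z, ∃ N : Set X, IsOpen N ∧ z ∈ N ∧ ∀ y y' (c : Path.Homotopic.Quotient x₀ y)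
      (q : Path y y'), (∀ t, q t ∈ N) → P y c → P y' (c.trans (.mk q)))
    {y : X} (γ : Path x₀ y) : P y (.mk γ) := by
  let Q : Set unitInterval :=
    {t | P (γ t) (.mk ((γ.subpath 0 t).cast γ.source.symm rfl))}
  have key : ∀ t, ∃ N : Set unitInterval, IsOpen N ∧ t ∈ N ∧ ∀ s ∈ N, (s ∈ Q ↔ t ∈ Q) := by
    intro t
    obtain ⟨N, hN, htN, hN'⟩ := hstep (γ t)
    obtain ⟨ε, hε, hV⟩ := Metric.isOpen_iff.1 (hN.preimage γ.continuous) t htN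
    set V := Metric.ball t ε with hVdef
    have htV : t ∈ V := Metric.mem_ball_self hε
    have hVord : V.OrdConnected := by
      have : V = Subtype.val ⁻¹' Metric.ball (t : ℝ) ε := rfl
      rw [this, Real.ball_eq_Ioo]
      exact Set.ordConnected_Ioo.preimage_mono (fun _ _ h => h)
    -- `hN'` applies to subpaths in both directions, so this yields an equivalence on `V`.
    have aux : ∀ a ∈ V, ∀ b ∈ V, a ∈ Q → b ∈ Q := by
      intro a ha b hb haQ
      have hab : ∀ u, γ.subpath a b u ∈ N := by
        intro u
        have hu : γ.subpath a b u ∈ Set.range (γ.subpath a b) := ⟨u, rfl⟩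
        rw [Path.range_subpath] at hu
        obtain ⟨v, hv, hvu⟩ := hu
        rw [← hvu]
        exact hV (hVord.uIcc_subset ha hb hv)
      have h1 := hN' _ _ _ (γ.subpath a b) hab haQ
      have h2 : (Path.Homotopic.Quotient.mk ((γ.subpath 0 a).cast γ.source.symm rfl)).trans
          (.mk (γ.subpath a b)) = .mk ((γ.subpath 0 b).cast γ.source.symm rfl) := by
        have := (Path.Homotopy.subpathTransSubpath γ 0 a b)
        rw [← Path.Homotopic.Quotient.mk_trans, Path.Homotopic.Quotient.eq]
        exact ⟨this.pathCast γ.source.symm rfl⟩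
      rw [h2] at h1
      exact h1
    exact ⟨V, Metric.isOpen_ball, htV, fun s hs => ⟨aux s hs t htV, aux t htV s hs⟩⟩
  have hclopen : IsClopen Q := by
    constructor
    · rw [← isOpen_compl_iff, isOpen_iff_forall_mem_open]
      intro t ht
      obtain ⟨N, h1, h2, h3⟩ := key t
      exact ⟨N, fun s hs h => ht ((h3 s hs).1 h), h1, h2⟩
    · rw [isOpen_iff_forall_mem_open]
      intro t ht
      obtain ⟨N, h1, h2, h3⟩ := key t
      exact ⟨N, fun s hs => (h3 s hs).2 ht, h1, h2⟩
  have hQ0 : (0 : unitInterval) ∈ Q := by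
    have : ∀ z (h : x₀ = z), P z (.mk ((Path.refl z).cast h rfl)) := by
      rintro _ rfl; exact h0
    have h := this (γ 0) γ.source.symm
    rw [← Path.subpath_self] at h
    exact h
  have hQ1 : (1 : unitInterval) ∈ Q := by
    rw [hclopen.eq_univ ⟨0, hQ0⟩]; trivial
  have : ∀ z (h : z = y), P z (.mk (γ.cast rfl h)) → P y (.mk γ) := by
    rintro _ rfl; exact id
  refine this (γ 1) γ.target ?_
  have h2 : P (γ 1) (.mk ((γ.subpath 0 1).cast γ.source.symm rfl)) := hQ1
  rw [Path.subpath_zero_one] at h2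
  exact h2

/-- Two paths with the same endpoints inside a simply connected set are homotopic in the ambient
space. -/
theorem IsSimplyConnected.mk_eq {X : Type*} [TopologicalSpace X] {U : Set X}
    (hU : IsSimplyConnected U) {x y : X} (p q : Path x y) (hp : ∀ t, p t ∈ U)
    (hq : ∀ t, q t ∈ U) : Path.Homotopic.Quotient.mk p = .mk q := by
  have := hU.simplyConnectedSpace
  have hx : x ∈ U := by simpa using hp 0
  have hy : y ∈ U := by simpa using hp 1
  let p' : Path (⟨x, hx⟩ : U) ⟨y, hy⟩ := ⟨⟨fun t => ⟨p t, hp t⟩, by fun_prop⟩, by simp, by simp⟩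
  let q' : Path (⟨x, hx⟩ : U) ⟨y, hy⟩ := ⟨⟨fun t => ⟨q t, hq t⟩, by fun_prop⟩, by simp, by simp⟩
  have h := (SimplyConnectedSpace.paths_homotopic p' q').map ⟨Subtype.val, continuous_subtype_val⟩
  exact (Path.Homotopic.Quotient.eq).2 h

theorem Path.trans_mem {X : Type*} [TopologicalSpace X] {x y z : X} {W : Set X} {p : Path x y}
    {q : Path y z} (hp : ∀ t, p t ∈ W) (hq : ∀ t, q t ∈ W) (t : unitInterval) :
    p.trans q t ∈ W := by
  have h : p.trans q t ∈ Set.range (p.trans q) := ⟨t, rfl⟩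
  rw [Path.trans_range] at h
  rcases h with ⟨u, hu⟩ | ⟨u, hu⟩
  · exact hu ▸ hp u
  · exact hu ▸ hq u

/-- The easy half of the Seifert-van Kampen theorem: if `X` is the union of two simply connected
open sets with path connected intersection, then any two paths from a point of the intersection
to `y` are homotopic. -/
theorem subsingleton_homotopic_of_cover {X : Type*} [TopologicalSpace X] {x₀ : X} {U V : Set X}
    (hU : IsOpen U) (hV : IsOpen V) (sU : IsSimplyConnected U) (sV : IsSimplyConnected V)
    (hUV : ∀ x, x ∈ U ∨ x ∈ V) (hI : IsPathConnected (U ∩ V)) (hx : x₀ ∈ U ∩ V) (y : X) :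
    Subsingleton (Path.Homotopic.Quotient x₀ y) := by
  have simp_W : ∀ W, (W = U ∨ W = V) → IsSimplyConnected W := by
    rintro W (rfl | rfl) <;> assumption
  -- A path inside one of the two sets that ends in the other one can be replaced by a path in the
  -- intersection.
  have transfer : ∀ W W' : Set X, (W = U ∨ W = V) → (W' = U ∨ W' = V) → ∀ y (p : Path x₀ y),
      (∀ t, p t ∈ W) → y ∈ W' →
      ∃ p' : Path x₀ y, (∀ t, p' t ∈ W') ∧ Path.Homotopic.Quotient.mk p = .mk p' := by
    intro W W' hW hW' y p hp hy
    by_cases hWW : W' = W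
    · subst hWW; exact ⟨p, hp, rfl⟩
    have hyW : y ∈ W := by simpa using hp 1
    have hyI : y ∈ U ∩ V := by
      rcases hW with rfl | rfl <;> rcases hW' with rfl | rfl
      · exact absurd rfl hWW
      · exact ⟨hyW, hy⟩
      · exact ⟨hy, hyW⟩
      · exact absurd rfl hWW
    obtain ⟨r, hr⟩ := hI.joinedIn x₀ hx y hyI
    have hrW : ∀ W, (W = U ∨ W = V) → ∀ t, r t ∈ W := by
      rintro W (rfl | rfl) t
      · exact (hr t).1
      · exact (hr t).2
    exact ⟨r, hrW W' hW', (simp_W W hW).mk_eq p r hp (hrW W hW)⟩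
  have main : ∀ γ : Path x₀ y, ∃ W : Set X, (W = U ∨ W = V) ∧
      ∃ p : Path x₀ y, (∀ t, p t ∈ W) ∧ Path.Homotopic.Quotient.mk γ = .mk p := by
    refine Path.track (fun y c => ∃ W : Set X, (W = U ∨ W = V) ∧
      ∃ p : Path x₀ y, (∀ t, p t ∈ W) ∧ c = .mk p) ?_ ?_
    · exact ⟨U, .inl rfl, Path.refl x₀, fun _ => hx.1, rfl⟩
    · intro z
      obtain ⟨W, hW, hzW⟩ : ∃ W, (W = U ∨ W = V) ∧ z ∈ W := by
        rcases hUV z with h | h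
        · exact ⟨U, .inl rfl, h⟩
        · exact ⟨V, .inr rfl, h⟩
      have hWo : IsOpen W := by rcases hW with rfl | rfl <;> assumption
      refine ⟨W, hWo, hzW, ?_⟩
      rintro y y' c q hq ⟨W', hW', p, hp, rfl⟩
      obtain ⟨p', hp', he⟩ := transfer W' W hW' hW y p hp (by simpa using hq 0)
      refine ⟨W, hW, p'.trans q, Path.trans_mem hp' hq, ?_⟩
      rw [he, Path.Homotopic.Quotient.mk_trans]
  refine ⟨fun a b => ?_⟩
  induction a using Path.Homotopic.Quotient.ind with | mk a => ?_
  induction b using Path.Homotopic.Quotient.ind with | mk b => ?_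
  obtain ⟨W, hW, p, hp, hap⟩ := main a
  obtain ⟨W', hW', q, hq, hbq⟩ := main b
  obtain ⟨q', hq', hqq⟩ := transfer W' W hW' hW y q hq (by simpa using hp 1)
  rw [hap, hbq, hqq]
  exact (simp_W W hW).mk_eq p q' hp hq'

/-! ### Open maps from a compact simply connected space -/

/-- The image of a path component of `f ⁻¹' U` is open in `U`, and also closed in `U` because the
component is closed in `f ⁻¹' U`; hence it is all of the connected set `U`. -/
theorem subset_image_pathComponentIn {S M : Type*} [TopologicalSpace S] [TopologicalSpace M]
    [LocallyPathConnectedSpace S] {f : S → M} (hf : Continuous f) (hfo : IsOpenMap f)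
    (hfc : IsClosedMap f) {U : Set M} (hU : IsOpen U) (hUc : IsPreconnected U) {s : S}
    (hs : f s ∈ U) : U ⊆ f '' pathComponentIn (f ⁻¹' U) s := by
  set W := pathComponentIn (f ⁻¹' U) s with hW
  have hO : IsOpen (f ⁻¹' U) := hU.preimage hf
  have hWo : IsOpen W := hO.pathComponentIn s
  have hR : IsOpen {a | a ∈ f ⁻¹' U ∧ a ∉ W} := by
    rw [isOpen_iff_forall_mem_open]
    rintro a ⟨ha, haW⟩
    refine ⟨pathComponentIn (f ⁻¹' U) a, ?_, hO.pathComponentIn a, mem_pathComponentIn_self ha⟩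
    intro b hb
    refine ⟨pathComponentIn_subset hb, fun hbW => haW ?_⟩
    exact JoinedIn.trans hbW (JoinedIn.symm hb)
  have hC : IsClosed (f '' {a | a ∈ f ⁻¹' U ∧ a ∉ W}ᶜ) := hfc _ hR.isClosed_compl
  refine hUc.subset_left_of_subset_union (hfo _ hWo) hC.isOpen_compl ?_ ?_ ?_
  · rw [Set.disjoint_compl_right_iff_subset]
    exact Set.image_mono fun a ha h => h.2 ha
  · intro y hy
    by_cases h : y ∈ f '' {a | a ∈ f ⁻¹' U ∧ a ∉ W}ᶜ
    · obtain ⟨a, ha, rfl⟩ := h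
      exact .inl ⟨a, by by_contra h; exact ha ⟨hy, h⟩, rfl⟩
    · exact .inr h
  · exact ⟨f s, hs, s, mem_pathComponentIn_self hs, rfl⟩

/-- If `S` is compact and locally path connected, and if any two paths in `S` from `s₀` to the same
point are homotopic, then a locally simply connected Hausdorff space receiving an open map from `S`
has finite fundamental group. -/
theorem finite_homotopicQuotient_of_isOpenMap {S M : Type*} [TopologicalSpace S]
    [TopologicalSpace M] [LocallyPathConnectedSpace S] [CompactSpace S] [PathConnectedSpace S]
    [T2Space M] {f : S → M} (hf : Continuous f) (hfo : IsOpenMap f)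
    (hM : ∀ x : M, ∃ U : Set M, IsOpen U ∧ x ∈ U ∧ IsSimplyConnected U) (s₀ : S)
    (hS : ∀ s : S, Subsingleton (Path.Homotopic.Quotient s₀ s)) :
    Finite (Path.Homotopic.Quotient (f s₀) (f s₀)) := by
  have local_eq : ∀ U : Set M, IsSimplyConnected U → ∀ s s' : S, ∀ p : Path s₀ s, ∀ r : Path s s',
      (∀ t, f (r t) ∈ U) → ∀ q : Path (f s) (f s'), (∀ t, q t ∈ U) →
      (Path.Homotopic.Quotient.mk (p.map hf)).trans (.mk q) = .mk ((p.trans r).map hf) := by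
    intro U hU s s' p r hr q hq
    rw [hU.mk_eq q (r.map hf) hq hr, Path.map_trans, Path.Homotopic.Quotient.mk_trans]
  have lift : ∀ {y : M} (γ : Path (f s₀) y), ∃ (s : S) (h : f s = y) (p : Path s₀ s),
      Path.Homotopic.Quotient.mk γ = .mk ((p.map hf).cast rfl h.symm) := by
    refine Path.track (fun y c => ∃ (s : S) (h : f s = y) (p : Path s₀ s),
      c = .mk ((p.map hf).cast rfl h.symm)) ?_ ?_
    · exact ⟨s₀, rfl, Path.refl s₀, by rw [← Path.Homotopic.Quotient.mk_refl]; rfl⟩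
    · intro z
      obtain ⟨U, hU, hzU, sU⟩ := hM z
      refine ⟨U, hU, hzU, ?_⟩
      rintro y y' c q hq ⟨s, rfl, p, rfl⟩
      obtain ⟨s', ⟨r, hr⟩, rfl⟩ := subset_image_pathComponentIn hf hfo hf.isClosedMap hU
        sU.isPathConnected.isConnected.isPreconnected (s := s) (by simpa using hq 0)
        (show y' ∈ U by simpa using hq 1)
      exact ⟨s', rfl, p.trans r, local_eq U sU s s' p r hr q hq⟩
  let F := f ⁻¹' {f s₀}
  have : CompactSpace F :=
    isCompact_iff_compactSpace.1 (isClosed_singleton.preimage hf).isCompact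
  let g : F → Path.Homotopic.Quotient (f s₀) (f s₀) := fun s =>
    .mk (((PathConnectedSpace.somePath s₀ s.1).map hf).cast rfl s.2.symm)
  have hg : IsLocallyConstant g := by
    rw [IsLocallyConstant.iff_exists_open]
    rintro ⟨s, hs⟩
    obtain ⟨U, hU, hzU, sU⟩ := hM (f s₀)
    have hsU : s ∈ f ⁻¹' U := by
      change f s ∈ U
      rw [show f s = f s₀ from hs]; exact hzU
    refine ⟨Subtype.val ⁻¹' pathComponentIn (f ⁻¹' U) s,
      ((hU.preimage hf).pathComponentIn s).preimage continuous_subtype_val,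
      mem_pathComponentIn_self hsU, ?_⟩
    rintro ⟨s', hs'⟩ ⟨r, hr⟩
    have e : f s = f s' := Eq.trans hs (Eq.symm hs')
    have h1 := local_eq U sU s s' (PathConnectedSpace.somePath s₀ s) r hr
      ((Path.refl (f s)).cast rfl e.symm) (fun _ => hsU)
    have h2 : Path.Homotopic.Quotient.mk ((PathConnectedSpace.somePath s₀ s).trans r) =
        .mk (PathConnectedSpace.somePath s₀ s') := (hS s').elim _ _
    have h3 := congrArg (fun c => Path.Homotopic.Quotient.map c ⟨f, hf⟩) h2
    have h4 : (Path.Homotopic.Quotient.mk (((PathConnectedSpace.somePath s₀ s).map hf))).trans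
        (.mk ((Path.refl (f s)).cast rfl e.symm)) =
        .mk ((PathConnectedSpace.somePath s₀ s').map hf) := h1.trans h3
    -- The endpoints are generalized so that the casts can be eliminated by substitution.
    have h5 : ∀ (a b : M) (c : Path (f s₀) a) (d : Path (f s₀) b) (e : a = b) (ha : a = f s₀)
        (hb : b = f s₀), (Path.Homotopic.Quotient.mk c).trans
        (.mk ((Path.refl a).cast rfl e.symm)) = .mk d →
        Path.Homotopic.Quotient.mk (d.cast rfl hb.symm) = .mk (c.cast rfl ha.symm) := by
      rintro a b c d rfl ha hb h
      subst ha
      have h' : Path.Homotopic.Quotient.mk c = .mk d := by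
        rw [← h]
        change _ = (Path.Homotopic.Quotient.mk c).trans (.mk (Path.refl _))
        simp
      exact h'.symm
    exact h5 _ _ _ _ e hs hs' h4
  have hrange : Set.range g = Set.univ := by
    refine Set.eq_univ_of_forall fun c => ?_
    induction c using Path.Homotopic.Quotient.ind with | mk γ => ?_
    obtain ⟨s, h, p, hp⟩ := lift γ
    refine ⟨⟨s, h⟩, ?_⟩
    rw [hp]
    have h2 : Path.Homotopic.Quotient.mk (PathConnectedSpace.somePath s₀ s) = .mk p :=
      (hS s).elim _ _
    have h3 : Path.Homotopic.Quotient.mk ((PathConnectedSpace.somePath s₀ s).map hf) =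
      .mk (p.map hf) := congrArg (fun c => Path.Homotopic.Quotient.map c ⟨f, hf⟩) h2
    exact congrArg (fun c => Path.Homotopic.Quotient.cast c rfl h.symm) h3
  exact Set.finite_univ_iff.1 (hrange ▸ hg.range_finite)

/-! ### The 3-sphere -/

theorem isSimplyConnected_of_homeomorph {X E : Type*} [TopologicalSpace X] [TopologicalSpace E]
    [ContractibleSpace E] {U : Set X} (e : U ≃ₜ E) : IsSimplyConnected U :=
  e.toHomotopyEquiv.simplyConnectedSpace

instance S3.fact_finrank : Fact (Module.finrank ℝ (EuclideanSpace ℝ (Fin 4)) = 3 + 1) :=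
  ⟨by simp⟩

/-- The sphere is covered by the complements of `-s₀` and of a second point `b ≠ s₀`. Each is
homeomorphic to `ℝ³` by stereographic projection, and their intersection is `ℝ³` minus a point. -/
theorem S3.subsingleton_homotopic (s₀ s : S3) : Subsingleton (Path.Homotopic.Quotient s₀ s) := by
  have compl_sc : ∀ v : S3, IsSimplyConnected ({v}ᶜ : Set S3) := by
    intro v
    let φ := stereographic' 3 v
    have hs : φ.source = {v}ᶜ := stereographic'_source v
    have ht : φ.target = Set.univ := stereographic'_target v
    rw [← hs]
    exact isSimplyConnected_of_homeomorph (φ.toHomeomorphSourceTarget.trans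
      ((Homeomorph.setCongr ht).trans (Homeomorph.Set.univ _)))
  let φ := stereographic' 3 (-s₀)
  have hs : φ.source = {-s₀}ᶜ := stereographic'_source _
  have ht : φ.target = Set.univ := stereographic'_target _
  have hs₀ : s₀ ∈ φ.source := by
    rw [hs]
    exact (ne_neg_of_mem_unit_sphere ℝ s₀)
  obtain ⟨w, hw⟩ : ∃ w : EuclideanSpace ℝ (Fin 3), w ≠ φ s₀ := exists_ne _
  have hwt : w ∈ φ.target := by rw [ht]; trivial
  let b := φ.symm w
  have hb : b ∈ φ.source := φ.map_target hwt
  have hbw : φ b = w := φ.right_inv hwt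
  have hbs : s₀ ≠ b := by
    rintro h; rw [← h] at hbw; exact hw hbw.symm
  have hI : ({-s₀}ᶜ ∩ {b}ᶜ : Set S3) = φ.symm '' {w}ᶜ := by
    ext x
    rw [← hs]
    constructor
    · rintro ⟨hx, hxb⟩
      refine ⟨φ x, fun h => hxb ?_, φ.left_inv hx⟩
      exact φ.injOn hx hb (by rw [hbw]; exact h)
    · rintro ⟨u, hu, rfl⟩
      have hut : u ∈ φ.target := by rw [ht]; trivial
      refine ⟨φ.map_target hut, fun h => hu ?_⟩
      exact φ.symm.injOn hut hwt h
  refine subsingleton_homotopic_of_cover (U := {-s₀}ᶜ) (V := {b}ᶜ) isOpen_compl_singleton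
    isOpen_compl_singleton (compl_sc _) (compl_sc _) ?_ ?_ ⟨hs ▸ hs₀, hbs⟩ s
  · intro x
    by_contra! h
    have h1 : x = -s₀ := by simpa using h.1
    have h2 : x = b := by simpa using h.2
    rw [hs] at hb
    exact hb (h2.symm.trans h1)
  · rw [hI]
    refine (isPathConnected_compl_singleton_of_one_lt_rank ?_ w).image' ?_
    · rw [← Module.finrank_eq_rank]; simp
    · exact φ.continuousOn_symm.mono (by rw [ht]; exact Set.subset_univ _)

theorem finite_fundamentalGroup_of_branchedCovering_from_sphere
    (M : Type*) [TopologicalSpace M] [ConnectedSpace M]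
    (hM : IsClosedManifold3 M) (L : Set M) (hL : IsLink L)
    (f : S3 → M) (hf : IsBranchedCovering f L) :
    ∀ x : M, Finite (FundamentalGroup M x) := by
  intro x
  obtain ⟨-, hT2, -, hchart⟩ := hM
  obtain ⟨-, hfo, hfp, -, -⟩ := hf
  have hf := hfp.continuous
  have : LocallyPathConnectedSpace S3 :=
    ChartedSpace.locallyPathConnectedSpace (EuclideanSpace ℝ (Fin 3)) S3
  have : PathConnectedSpace S3 := isPathConnected_iff_pathConnectedSpace.1
    (isPathConnected_sphere (by rw [← Module.finrank_eq_rank]; simp) 0 zero_le_one)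
  have : CompactSpace S3 := isCompact_iff_compactSpace.1 (isCompact_sphere _ _)
  obtain ⟨s₀, rfl⟩ : x ∈ Set.range f := by
    rw [IsClopen.eq_univ ⟨hfp.isClosedMap.isClosed_range, hfo.isOpen_range⟩ (Set.range_nonempty f)]
    trivial
  refine finite_homotopicQuotient_of_isOpenMap hf hfo (fun y => ?_) s₀
    (S3.subsingleton_homotopic s₀)
  obtain ⟨U, hU, hyU, ⟨e⟩⟩ := hchart y
  exact ⟨U, hU, hyU, isSimplyConnected_of_homeomorph e⟩
end
end

section
/- Let M be a closed connected topological 3-manifold such that the abelianization of the fundamental group of M is infinite (equivalently, M has nonzero first Betti number). Then there is no link L ⊆ M and no branched covering f : S³ → M with branching set L, where S³ is the unit sphere in euclidean ℝ⁴. -/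
/-!
If a compact, simply connected, locally path-connected space such as `S³` admits a continuous open
map `f` to a Hausdorff manifold `M`, then `π₁(M)` is finite, and so is its abelianization.

Conceptually, `f` lifts to a map from `S³` to the universal cover of `M`. The lift is open and its
image is compact, so it is onto and the universal cover is compact, which makes its fibres finite.

To avoid constructing the universal cover, its points are replaced by homotopy classes of paths in
`M` starting at `f s`; the lift sends `y` to the class of the image of any path from `s` to `y`.
Surjectivity of the lift becomes `exists_tracks_one`: along a given path in `M`, the set of times
whose initial segment is represented by a point of `S³` is closed by compactness of `S³` and open
because `f` is open (both through `Tracks.step`, which uses a simply connected neighbourhood in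
`M`). So every class in `π₁(M, f s)` comes from a point of the compact fibre over `f s`. On this
fibre the class is locally constant, hence takes finitely many values.

That `S³` is simply connected is proved in `simplyConnectedSpace_sphere`: a loop is approximated by
a `C¹` loop in the ambient space, whose radial projection misses a point because the cone over it is
a `C¹` image of the plane. The loop then contracts in a punctured sphere, which is homeomorphic to a
vector space by stereographic projection.
-/

open Topology

noncomputable section

/-! ### Simple connectivity of spheres -/

/-- A continuous path in a finite-dimensional space is within distance one of a `C¹` path
with the same endpoints. -/
lemma exists_contDiff_path_near {E : Type*} [NormedAddCommGroup E] [InnerProductSpace ℝ E]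
    [FiniteDimensional ℝ E] {x y : E} (γ : Path x y) :
    ∃ p : ℝ → E, ContDiff ℝ 1 p ∧ p 0 = x ∧ p 1 = y ∧
      ∀ t : unitInterval, ‖p t - γ t‖ < 1 := by
  have huc : UniformContinuous γ.extend := by
    have h1 : UniformContinuous γ := CompactSpace.uniformContinuous_of_continuous γ.continuous
    exact h1.comp (LipschitzWith.projIcc zero_le_one).uniformContinuous
  obtain ⟨g, hg, hgd⟩ := huc.exists_contDiff_dist_le (ε := 1 / 4) (by norm_num)
  -- The affine correction restores the endpoints and has norm less than `1 / 4` on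
  -- the unit interval.
  refine ⟨fun t => g t + ((1 - t) • (x - g 0) + t • (y - g 1)), ?_, by simp, by simp, ?_⟩
  · have hg1 : ContDiff ℝ 1 g := hg.of_le (by exact_mod_cast le_top)
    fun_prop
  · intro t
    have h0 : ‖x - g 0‖ < 1 / 4 := by
      have := hgd 0
      rwa [dist_comm, dist_eq_norm, Path.extend_zero] at this
    have h1 : ‖y - g 1‖ < 1 / 4 := by
      have := hgd 1
      rwa [dist_comm, dist_eq_norm, Path.extend_one] at this
    have ht : ‖g t - γ t‖ < 1 / 4 := by
      have := hgd t
      rwa [dist_eq_norm, Path.extend_extends'] at this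
    have e : g t + ((1 - (t : ℝ)) • (x - g 0) + (t : ℝ) • (y - g 1)) - γ t
        = (g t - γ t) + ((1 - (t : ℝ)) • (x - g 0) + (t : ℝ) • (y - g 1)) := by abel
    have ht0 : 0 ≤ (t : ℝ) := t.2.1
    have ht1 : (t : ℝ) ≤ 1 := t.2.2
    calc ‖g t + ((1 - (t : ℝ)) • (x - g 0) + (t : ℝ) • (y - g 1)) - γ t‖
        ≤ ‖g t - γ t‖ + (‖(1 - (t : ℝ)) • (x - g 0)‖ + ‖(t : ℝ) • (y - g 1)‖) := by
          rw [e]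
          exact (norm_add_le _ _).trans (by gcongr; exact norm_add_le _ _)
      _ = ‖g t - γ t‖ + ((1 - t) * ‖x - g 0‖ + t * ‖y - g 1‖) := by
          rw [norm_smul, norm_smul, Real.norm_of_nonneg ht0,
            Real.norm_of_nonneg (sub_nonneg.2 ht1)]
      _ < 1 := by
          nlinarith [norm_nonneg (x - g 0), norm_nonneg (y - g 1)]

/-- The cone over a `C¹` curve in dimension greater than two has dense complement, so the radial
projection of the curve misses a point of the unit sphere. -/
lemma exists_sphere_forall_normalize_ne {E : Type*} [NormedAddCommGroup E]
    [InnerProductSpace ℝ E] [FiniteDimensional ℝ E] (hE : 2 < Module.finrank ℝ E)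
    {p : ℝ → E} (hp : ContDiff ℝ 1 p) :
    ∃ v : E, ‖v‖ = 1 ∧ ∀ t, ‖p t‖⁻¹ • p t ≠ v := by
  have hd : Dense (Set.range (fun z : ℝ × ℝ => z.2 • p z.1))ᶜ := by
    apply ContDiff.dense_compl_range_of_finrank_lt_finrank
    · fun_prop
    · simpa using hE
  obtain ⟨w, hw⟩ := hd.nonempty
  have hw0 : w ≠ 0 := by
    rintro rfl
    exact hw ⟨(0, 0), by simp⟩
  refine ⟨‖w‖⁻¹ • w, norm_smul_inv_norm hw0, fun t ht => hw ⟨(t, ‖w‖ * ‖p t‖⁻¹), ?_⟩⟩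
  have hn : ‖w‖ ≠ 0 := norm_ne_zero_iff.2 hw0
  simp only [mul_smul, ht, smul_inv_smul₀ hn]

/-- A punctured sphere is simply connected, by stereographic projection. -/
lemma isSimplyConnected_compl_singleton_sphere {E : Type*} [NormedAddCommGroup E]
    [InnerProductSpace ℝ E] (v : Metric.sphere (0 : E) 1) :
    IsSimplyConnected ({v}ᶜ : Set (Metric.sphere (0 : E) 1)) := by
  have hv : ‖(v : E)‖ = 1 := by simp
  have e := (stereographic hv).toHomeomorphSourceTarget
  rw [stereographic_source, stereographic_target] at e
  have e' := e.trans (Homeomorph.Set.univ _)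
  exact e'.toHomotopyEquiv.simplyConnectedSpace

/-- Points of the unit sphere and points at distance less than one from them are joined by a
segment that avoids the origin. -/
lemma add_smul_sub_ne_zero {E : Type*} [NormedAddCommGroup E] [NormedSpace ℝ E] {a b : E}
    (ha : ‖a‖ = 1) (hab : ‖b - a‖ < 1) {s : ℝ} (hs0 : 0 ≤ s) (hs1 : s ≤ 1) :
    a + s • (b - a) ≠ 0 := by
  intro h
  have h1 : ‖a‖ = s * ‖b - a‖ := by
    conv_lhs => rw [eq_neg_of_add_eq_zero_left h]
    rw [norm_neg, norm_smul, Real.norm_of_nonneg hs0]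
  nlinarith [norm_nonneg (b - a)]

/-- A loop in the sphere is homotopic to a radially projected `C¹` loop, which misses a point and
hence contracts in a punctured sphere. -/
theorem simplyConnectedSpace_sphere {E : Type*} [NormedAddCommGroup E]
    [InnerProductSpace ℝ E] [FiniteDimensional ℝ E] (hE : 2 < Module.finrank ℝ E) :
    SimplyConnectedSpace (Metric.sphere (0 : E) 1) := by
  rw [simply_connected_iff_loops_nullhomotopic]
  refine ⟨?_, fun x γ => ?_⟩
  · rw [← isPathConnected_iff_pathConnectedSpace]
    refine isPathConnected_sphere ?_ 0 zero_le_one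
    rw [← Module.finrank_eq_rank]
    exact_mod_cast (by omega : 1 < Module.finrank ℝ E)
  · obtain ⟨p, hp, hp0, hp1, hpγ⟩ := exists_contDiff_path_near (γ.map continuous_subtype_val)
    obtain ⟨v, hv, hvp⟩ := exists_sphere_forall_normalize_ne hE hp
    have hne : ∀ (s t : unitInterval), (γ t : E) + (s : ℝ) • (p t - γ t) ≠ 0 := fun s t =>
      add_smul_sub_ne_zero (by simp) (hpγ t) s.2.1 s.2.2
    have hcont : Continuous fun z : unitInterval × unitInterval =>
        (γ z.2 : E) + (z.1 : ℝ) • (p z.2 - γ z.2) := by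
      have := hp.continuous
      fun_prop
    let G : unitInterval × unitInterval → Metric.sphere (0 : E) 1 := fun z =>
      ⟨‖(γ z.2 : E) + (z.1 : ℝ) • (p z.2 - γ z.2)‖⁻¹ •
        ((γ z.2 : E) + (z.1 : ℝ) • (p z.2 - γ z.2)), by
          rw [mem_sphere_zero_iff_norm]
          exact norm_smul_inv_norm (𝕜 := ℝ) (hne z.1 z.2)⟩
    have hG : Continuous G :=
      ((hcont.norm.inv₀ fun z => norm_ne_zero_iff.2 (hne z.1 z.2)).smul hcont).subtype_mk _
    have hG0 : ∀ t, G (0, t) = γ t := fun t => Subtype.ext (by simp [G])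
    have hGs : ∀ s, G (s, 0) = x := fun s => Subtype.ext (by simp [G, hp0])
    have hGt : ∀ s, G (s, 1) = x := fun s => Subtype.ext (by simp [G, hp1])
    let δ : Path x x :=
      { toFun := fun t => G (1, t)
        continuous_toFun := by fun_prop
        source' := hGs 1
        target' := hGt 1 }
    have hγδ : γ.Homotopic δ :=
      ⟨{ toFun := G
         continuous_toFun := hG
         map_zero_left := hG0
         map_one_left := fun _ => rfl
         prop' := by
          rintro s t (rfl | rfl)
          · simp [hGs]
          · simp [hGt] }⟩
    refine hγδ.trans ?_
    have hδ : ∀ t, δ t ∈ ({⟨v, by simpa using hv⟩}ᶜ : Set (Metric.sphere (0 : E) 1)) := by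
      intro t ht
      refine hvp t ?_
      simpa [δ, G, -smul_add] using congrArg Subtype.val ht
    obtain ⟨F, -⟩ := (isSimplyConnected_iff_exists_homotopy_refl_forall_mem.1
      (isSimplyConnected_compl_singleton_sphere ⟨v, by simpa using hv⟩)).2 x δ hδ
    exact ⟨F⟩

/-! ### Open maps from compact simply connected spaces -/

lemma homotopic_of_mem_isSimplyConnected {M : Type*} [TopologicalSpace M] {U : Set M}
    (hU : IsSimplyConnected U) {a b : M} (p q : Path a b) (hp : ∀ t, p t ∈ U)
    (hq : ∀ t, q t ∈ U) : p.Homotopic q := by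
  have := hU.simplyConnectedSpace
  have ha : a ∈ U := by simpa using hp 0
  have hb : b ∈ U := by simpa using hp 1
  let p' : Path (⟨a, ha⟩ : U) ⟨b, hb⟩ :=
    { toFun := fun t => ⟨p t, hp t⟩
      source' := by simp
      target' := by simp }
  let q' : Path (⟨a, ha⟩ : U) ⟨b, hb⟩ :=
    { toFun := fun t => ⟨q t, hq t⟩
      source' := by simp
      target' := by simp }
  exact (SimplyConnectedSpace.paths_homotopic p' q').map ⟨Subtype.val, continuous_subtype_val⟩

/-- The point `y` tracks the path `γ` at time `t`: it lies over `γ t`, and the image of some path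
from `s` to `y` is homotopic, relative to endpoints, to the initial segment of `γ` ending at time
`t`. When the domain is simply connected, this says that `y` and the segment of `γ` determine the
same point of the universal cover. -/
def Tracks {X M : Type*} [TopologicalSpace X] [TopologicalSpace M] {f : X → M}
    (hf : Continuous f) {s : X} {b : M} (γ : Path (f s) b) (t : unitInterval) (y : X) : Prop :=
  ∃ (h : γ t = f y) (p : Path s y),
    (γ.subpath 0 t).Homotopic ((p.map hf).cast γ.source h)

/-- Tracking is preserved by small moves of the time and of the point: inside a simply connected
set there is only one homotopy class of paths along which to extend. -/
lemma Tracks.step {X M : Type*} [TopologicalSpace X] [TopologicalSpace M] {f : X → M}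
    {hf : Continuous f} {s : X} {b : M} {γ : Path (f s) b} {t t' : unitInterval} {y y' : X}
    (h : Tracks hf γ t y) {U : Set M} (hU : IsSimplyConnected U) {V : Set X}
    (hV : IsPathConnected V) (hVU : V ⊆ f ⁻¹' U) (hy : y ∈ V) (hy' : y' ∈ V)
    (htt : Set.uIcc t t' ⊆ γ ⁻¹' U) (hft : γ t' = f y') : Tracks hf γ t' y' := by
  obtain ⟨h1, p, hp⟩ := h
  have hJ := hV.joinedIn y hy y' hy'
  let q := hJ.somePath
  refine ⟨hft, p.trans q, ?_⟩
  have e : ((p.trans q).map hf).cast γ.source hft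
      = ((p.map hf).cast γ.source h1).trans ((q.map hf).cast h1 hft) := by
    rw [Path.map_trans, Path.cast_trans]
  rw [e]
  have h2 : (γ.subpath t t').Homotopic ((q.map hf).cast h1 hft) := by
    refine homotopic_of_mem_isSimplyConnected hU _ _ (fun r => ?_) (fun r => ?_)
    · have : γ.subpath t t' r ∈ γ '' Set.uIcc t t' := by
        rw [← Path.range_subpath]
        exact Set.mem_range_self r
      obtain ⟨z, hz, hz'⟩ := this
      rw [← hz']
      exact htt hz
    · exact hVU (hJ.somePath_mem r)
  exact Path.Homotopic.trans ⟨(Path.Homotopy.subpathTransSubpath γ 0 t t').symm⟩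
    (hp.hcomp h2)

/-- Every path in the target is tracked up to its end: the set of tracked times is closed by
compactness of the domain, and open because the map is open. -/
lemma exists_tracks_one {X M : Type*} [TopologicalSpace X] [TopologicalSpace M]
    [CompactSpace X] [LocallyPathConnectedSpace X] [T2Space M] {f : X → M}
    (hf : Continuous f) (hfo : IsOpenMap f)
    (hM : ∀ x : M, ∃ U : Set M, IsOpen U ∧ x ∈ U ∧ IsSimplyConnected U)
    {s : X} {b : M} (γ : Path (f s) b) : ∃ y, Tracks hf γ 1 y := by
  have hloc : ∀ t y, γ t = f y → ∃ U : Set M, IsSimplyConnected U ∧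
      (∀ᶠ t' in 𝓝 t, Set.uIcc t t' ⊆ γ ⁻¹' U) ∧
      ∃ V ∈ 𝓝 y, IsPathConnected V ∧ V ⊆ f ⁻¹' U := by
    intro t y hty
    obtain ⟨U, hUo, hU, hUs⟩ := hM (γ t)
    refine ⟨U, hUs, ?_, ?_⟩
    · have h1 : Filter.Tendsto (fun t' => Set.uIcc t t') (𝓝 t) (𝓝 t).smallSets :=
        tendsto_const_nhds.uIcc Filter.tendsto_id
      exact h1.eventually (Filter.eventually_smallSets_subset.2
        ((hUo.preimage γ.continuous).mem_nhds hU))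
    · have h2 : f ⁻¹' U ∈ 𝓝 y := (hUo.preimage hf).mem_nhds (by rwa [Set.mem_preimage, ← hty])
      obtain ⟨V, ⟨hV, hVc⟩, hVU⟩ := (path_connected_basis y).mem_iff.1 h2
      exact ⟨V, hV, hVc, hVU⟩
  let R : Set (unitInterval × X) := {z | Tracks hf γ z.1 z.2}
  have hRc : IsClosed R := by
    refine isClosed_of_closure_subset fun z hz => ?_
    have hZ : IsClosed {z : unitInterval × X | γ z.1 = f z.2} :=
      isClosed_eq (by fun_prop) (by fun_prop)
    have hzf : γ z.1 = f z.2 := closure_minimal (fun w hw => hw.1) hZ hz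
    obtain ⟨U, hU, hUt, V, hV, hVc, hVU⟩ := hloc z.1 z.2 hzf
    obtain ⟨w, ⟨hw1, hw2⟩, hwR⟩ := mem_closure_iff_nhds.1 hz _ (prod_mem_nhds hUt hV)
    exact Tracks.step hwR hU hVc hVU hw2 (mem_of_mem_nhds hV)
      (by rw [Set.uIcc_comm]; exact hw1) hzf
  have hTc : IsClosed (Prod.fst '' R) := (hRc.isCompact.image continuous_fst).isClosed
  have hTo : IsOpen (Prod.fst '' R) := by
    rw [isOpen_iff_mem_nhds]
    rintro _ ⟨⟨t, y⟩, h, rfl⟩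
    obtain ⟨U, hU, hUt, V, hV, hVc, hVU⟩ := hloc t y h.1
    have hVt : ∀ᶠ t' in 𝓝 t, γ t' ∈ f '' V := by
      refine γ.continuous.continuousAt.eventually ?_
      rw [h.1]
      exact hfo.image_mem_nhds hV
    filter_upwards [hUt, hVt] with t' h1 ⟨y', hy', h2⟩
    exact ⟨(t', y'), Tracks.step h hU hVc hVU (mem_of_mem_nhds hV) hy' h1 h2.symm, rfl⟩
  have h0 : (0 : unitInterval) ∈ Prod.fst '' R :=
    ⟨(0, s), ⟨γ.source, Path.refl s, by
      rw [Path.subpath_self]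
      convert! Path.Homotopic.refl _ using 1
      ext r
      simp⟩, rfl⟩
  have huniv : Prod.fst '' R = Set.univ := IsClopen.eq_univ ⟨hTc, hTo⟩ ⟨0, h0⟩
  obtain ⟨⟨t, y⟩, h, rfl⟩ : (1 : unitInterval) ∈ Prod.fst '' R := huniv ▸ Set.mem_univ _
  exact ⟨y, h⟩

/-- Every loop at `f s` is homotopic to the image of a path ending in the compact fibre over
`f s`, and the homotopy class of that image depends only, and locally constantly, on the end
point. -/
theorem finite_fundamentalGroup_of_isOpenMap {X M : Type*} [TopologicalSpace X]
    [TopologicalSpace M] [CompactSpace X] [LocallyPathConnectedSpace X] [SimplyConnectedSpace X]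
    [T2Space M] {f : X → M} (hf : Continuous f) (hfo : IsOpenMap f)
    (hM : ∀ x : M, ∃ U : Set M, IsOpen U ∧ x ∈ U ∧ IsSimplyConnected U) (s : X) :
    Finite (FundamentalGroup M (f s)) := by
  change Finite (Path.Homotopic.Quotient (f s) (f s))
  have : CompactSpace (f ⁻¹' {f s}) :=
    isCompact_iff_compactSpace.1 (isClosed_singleton.preimage hf).isCompact
  let γ : f ⁻¹' {f s} → Path (f s) (f s) := fun y =>
    ((PathConnectedSpace.somePath s y.1).map hf).cast rfl y.2.symm
  have key : ∀ (δ : Path (f s) (f s)) (y : f ⁻¹' {f s}),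
      Tracks hf δ 1 y.1 → δ.Homotopic (γ y) := by
    rintro δ y ⟨h, p, hp⟩
    have h1 := hp.pathCast δ.source.symm δ.target.symm
    have h2 : (p.map hf).Homotopic ((PathConnectedSpace.somePath s y.1).map hf) :=
      (SimplyConnectedSpace.paths_homotopic p _).map ⟨f, hf⟩
    rw [Path.subpath_zero_one] at h1
    exact h1.trans (h2.pathCast rfl y.2.symm)
  have hlc : IsLocallyConstant fun y => Path.Homotopic.Quotient.mk (γ y) := by
    rw [IsLocallyConstant.iff_eventually_eq]
    intro y
    obtain ⟨U, hUo, hU, hUs⟩ := hM (f s)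
    have h2 : f ⁻¹' U ∈ 𝓝 y.1 := (hUo.preimage hf).mem_nhds (by rwa [Set.mem_preimage, y.2])
    obtain ⟨V, ⟨hV, hVc⟩, hVU⟩ := (path_connected_basis y.1).mem_iff.1 h2
    have hy : Tracks hf (γ y) 1 y.1 := by
      refine ⟨(γ y).target.trans y.2.symm, PathConnectedSpace.somePath s y.1, ?_⟩
      rw [Path.subpath_zero_one]
      exact Path.Homotopic.refl _
    filter_upwards [continuous_subtype_val.continuousAt hV] with y' hy'
    refine (Path.Homotopic.Quotient.eq.2 (key _ _ (hy.step hUs hVc hVU (mem_of_mem_nhds hV) hy'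
      ?_ ((γ y).target.trans y'.2.symm)))).symm
    simpa using hU
  refine Set.finite_univ_iff.1 (hlc.range_finite.subset fun c _ => ?_)
  induction c using Path.Homotopic.Quotient.ind with
  | mk δ =>
    obtain ⟨y, hy⟩ := exists_tracks_one hf hfo hM δ
    have hy1 : f y = f s := hy.1.symm.trans δ.target
    exact ⟨⟨y, hy1⟩, (Path.Homotopic.Quotient.eq.2 (key δ ⟨y, hy1⟩ hy)).symm⟩

/-- If the abelianization of the fundamental group of a closed connected `3`-manifold `M`
is infinite (equivalently, `M` has nonzero first Betti number), then there is no link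
`L ⊆ M` and no branched covering `S³ → M` with branching set `L`. -/
theorem no_branchedCovering_from_sphere_of_infinite_abelianization
    (M : Type*) [TopologicalSpace M] [ConnectedSpace M]
    (hM : IsClosedManifold3 M)
    (hab : ∀ x : M, Infinite (Abelianization (FundamentalGroup M x))) :
    ¬ ∃ L : Set M, IsLink L ∧ ∃ f : ↥S3 → M, IsBranchedCovering f L := by
  rintro ⟨L, -, f, -, hfo, hfp, -⟩
  obtain ⟨-, hT2, -, hloc⟩ := hM
  have hrank : Module.finrank ℝ (EuclideanSpace ℝ (Fin 4)) = 3 + 1 := by simp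
  have : Fact (Module.finrank ℝ (EuclideanSpace ℝ (Fin 4)) = 3 + 1) := ⟨hrank⟩
  have : LocallyPathConnectedSpace S3 :=
    ChartedSpace.locallyPathConnectedSpace (EuclideanSpace ℝ (Fin 3)) _
  have : SimplyConnectedSpace S3 := simplyConnectedSpace_sphere (by omega)
  have hsc : ∀ x : M, ∃ U : Set M, IsOpen U ∧ x ∈ U ∧ IsSimplyConnected U := by
    intro x
    obtain ⟨U, hUo, hxU, ⟨e⟩⟩ := hloc x
    exact ⟨U, hUo, hxU, e.toHomotopyEquiv.simplyConnectedSpace⟩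
  let s : S3 := Classical.arbitrary S3
  have hfin := finite_fundamentalGroup_of_isOpenMap hfp.continuous hfo hsc s
  have hfin' : Finite (Abelianization (FundamentalGroup M (f s))) :=
    Quotient.finite _
  exact not_finite_iff_infinite.2 (hab (f s)) hfin'
end
end

section
/- Let f : X → Y and g : Y → Z be covering maps between topological spaces, and suppose every fiber of g is finite. Then the composition g ∘ f : X → Z is a covering map; moreover, if every fiber of f is also finite, then every fiber of g ∘ f is finite. -/
/-!
Fix `z : Z` and trivialize `g` over an open `U ∋ z` by sections `s i : U → Y`, indexed by the fiber
`I` of `g` over `z`. For each `i`, trivialize `f` over an open `V i ∋ s i z`, with fiber `J i`.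
Since `I` is finite, the set `W` of those `w ∈ U` with `s i w ∈ V i` for all `i` is an open
neighborhood of `z`, and over `W` the composite `g ∘ f` has the sections obtained by following `s i`
with the sections of `f` over `V i`, indexed by `Σ i, J i`. Every point of `X` over `W` lies on
exactly one of these sections. As `g ∘ f` is a local homeomorphism, its continuous sections over
open sets are open embeddings, so they assemble into a trivialization
(`IsLocalHomeomorph.isEvenlyCovered_of_sections`).
-/

/-- A point is evenly covered by a local homeomorphism as soon as the preimage of an open
neighborhood is the disjoint union of the images of a family of continuous sections. -/
theorem IsLocalHomeomorph.isEvenlyCovered_of_sections {E B ι : Type*} [TopologicalSpace E]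
    [TopologicalSpace B] [TopologicalSpace ι] [DiscreteTopology ι] {p : E → B}
    (hp : IsLocalHomeomorph p) {U : Set B} (hU : IsOpen U) (T : ι → U → E)
    (hT : ∀ i, Continuous (T i)) (hpT : ∀ i u, p (T i u) = u)
    (hinj : ∀ i i' u, T i u = T i' u → i = i')
    (hsurj : ∀ e, ∀ h : p e ∈ U, ∃ i, T i ⟨p e, h⟩ = e) {x : B} (hx : x ∈ U) :
    IsEvenlyCovered p x ι := by
  have hopen : ∀ i, IsOpenMap (T i) := fun i ↦ by
    have hs : p ∘ T i = Subtype.val := funext (hpT i)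
    exact (hp.isOpenEmbedding_of_comp (hs ▸ hU.isOpenEmbedding_subtypeVal) (hT i)).isOpenMap
  have hmem : ∀ a : U × ι, T a.2 a.1 ∈ p ⁻¹' U := fun a ↦ by
    rw [Set.mem_preimage, hpT]; exact a.1.2
  let F : U × ι → p ⁻¹' U := fun a ↦ ⟨T a.2 a.1, hmem a⟩
  have hF : F.Bijective := by
    constructor
    · rintro ⟨u, i⟩ ⟨u', i'⟩ h
      have h1 : T i u = T i' u' := congrArg Subtype.val h
      obtain rfl : u = u' := Subtype.ext (by rw [← hpT i u, h1, hpT])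
      rw [hinj i i' u h1]
    · rintro ⟨e, he⟩
      obtain ⟨i, hi⟩ := hsurj e he
      exact ⟨(⟨p e, he⟩, i), Subtype.ext hi⟩
  have hFc : Continuous F :=
    (continuous_prod_of_discrete_right.mpr hT).subtype_mk hmem
  have hFo : IsOpenMap F := by
    intro S hS
    have : F '' S = Subtype.val ⁻¹' ⋃ i, T i '' {u | (u, i) ∈ S} := by
      ext e
      simp only [Set.mem_image, Set.mem_preimage, Set.mem_iUnion, Set.mem_ofPred_eq, Prod.exists, F,
        Subtype.ext_iff]
      exact exists_comm
    rw [this]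
    exact (isOpen_iUnion fun i ↦
      hopen i _ (hS.preimage (by fun_prop))).preimage continuous_subtype_val
  let H := (Equiv.ofBijective F hF).toHomeomorphOfContinuousOpen hFc hFo
  refine ⟨‹_›, U, hx, hU, hU.preimage hp.continuous, H.symm, fun e ↦ ?_⟩
  obtain ⟨a, rfl⟩ := H.surjective e
  rw [H.symm_apply_apply]
  exact (hpT _ _).symm

/-- The composition of two covering maps is a covering map provided the fibers of the
second one are finite; moreover if the fibers of both are finite, so are the fibers of
the composition. -/
theorem isCoveringMap_comp_of_finite_fibers
    {X Y Z : Type*} [TopologicalSpace X] [TopologicalSpace Y] [TopologicalSpace Z]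
    (f : X → Y) (g : Y → Z) (hf : IsCoveringMap f) (hg : IsCoveringMap g)
    (hgfin : ∀ z : Z, Set.Finite (g ⁻¹' {z})) :
    IsCoveringMap (g ∘ f) ∧
      ((∀ y : Y, Set.Finite (f ⁻¹' {y})) →
        ∀ z : Z, Set.Finite ((g ∘ f) ⁻¹' {z})) := by
  refine ⟨fun z ↦ ?_, fun hffin z ↦ (hgfin z).preimage' fun y _ ↦ hffin y⟩
  have : Finite (g ⁻¹' {z}) := hgfin z
  obtain ⟨_, U, hzU, hU, -, H, hH⟩ := hg z
  let s : g ⁻¹' {z} → U → Y := fun i u ↦ (H.symm (u, i)).1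
  have hs : ∀ i, Continuous (s i) := fun i ↦ by fun_prop
  have hgs : ∀ i u, g (s i u) = u := fun i u ↦ by
    rw [← hH, H.apply_symm_apply]
  choose hJ V hyV hV _ K hK using fun i ↦ hf (s i ⟨z, hzU⟩)
  let N : Set U := ⋂ i, s i ⁻¹' V i
  have hN : IsOpen N := isOpen_iInter_of_finite fun i ↦ (hV i).preimage (hs i)
  let W : Set Z := Subtype.val '' N
  have hW : IsOpen W := hU.isOpenMap_subtype_val _ hN
  have hWU : ∀ w : W, w.1 ∈ U := by
    rintro ⟨_, u, -, rfl⟩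
    exact u.2
  have hWV : ∀ (w : W) i, s i ⟨w, hWU w⟩ ∈ V i := by
    rintro ⟨_, u, hu, rfl⟩ i
    exact Set.mem_iInter.mp hu i
  let T : (Σ i, f ⁻¹' {s i ⟨z, hzU⟩}) → W → X := fun a w ↦
    ((K a.1).symm (⟨s a.1 ⟨w, hWU w⟩, hWV w a.1⟩, a.2)).1
  have hfT : ∀ a w, f (T a w) = s a.1 ⟨w, hWU w⟩ := fun a w ↦ by
    rw [← hK, Homeomorph.apply_symm_apply]
  refine IsEvenlyCovered.to_isEvenlyCovered_preimage <|
    (hg.isLocalHomeomorph.comp hf.isLocalHomeomorph).isEvenlyCovered_of_sections hW T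
      (fun a ↦ ?_) (fun a w ↦ ?_) ?_ ?_ ⟨⟨z, hzU⟩, Set.mem_iInter.mpr hyV, rfl⟩
  · have h1 : Continuous fun w : W ↦ s a.1 ⟨w, hWU w⟩ :=
      (hs a.1).comp (continuous_subtype_val.subtype_mk hWU)
    exact continuous_subtype_val.comp <| (K a.1).symm.continuous.comp <|
      (h1.subtype_mk fun w ↦ hWV w a.1).prodMk continuous_const
  · rw [Function.comp_apply, hfT, hgs]
  · rintro ⟨i, j⟩ ⟨i', j'⟩ w h
    have h1 : s i ⟨w, hWU w⟩ = s i' ⟨w, hWU w⟩ := by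
      rw [← hfT ⟨i, j⟩ w, h, hfT]
    obtain rfl : i = i' := congrArg Prod.snd (H.symm.injective (Subtype.ext h1))
    have h2 : j = j' := congrArg Prod.snd ((K i).symm.injective (Subtype.ext h))
    rw [h2]
  · intro x hx
    have hxU : g (f x) ∈ U := hWU ⟨_, hx⟩
    let i := (H ⟨f x, hxU⟩).2
    have hi : s i ⟨g (f x), hxU⟩ = f x := by
      have : (⟨g (f x), hxU⟩, i) = H ⟨f x, hxU⟩ := Prod.ext (Subtype.ext (hH ⟨f x, hxU⟩).symm) rfl
      simp only [s, this, H.symm_apply_apply]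
    have hxV : f x ∈ V i := hi ▸ hWV ⟨_, hx⟩ i
    refine ⟨⟨i, (K i ⟨x, hxV⟩).2⟩, ?_⟩
    have : ((⟨s i ⟨g (f x), hxU⟩, hWV ⟨_, hx⟩ i⟩, (K i ⟨x, hxV⟩).2) : V i × _) = K i ⟨x, hxV⟩ :=
      Prod.ext (Subtype.ext (hi.trans (hK i ⟨x, hxV⟩).symm)) rfl
    exact congrArg Subtype.val ((K i).symm_apply_eq.mpr this)
end
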